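/- Let G ⊆ UT(n,ℝ) be a real unipotent group and let α ∈ G^♯. Suppose H₁, H₂ are real algebraic subgroups of G and g₁, g₂ ∈ G are such that the cosets g₁H₁ and g₂H₂ are both near α. Then g₁H₁ ∩ g₂H₂ ≠ ∅, this intersection is a coset c·(H₁ ∩ H₂) for any c ∈ g₁H₁ ∩ g₂H₂, and the coset g₁H₁ ∩ g₂H₂ is near α as well, i.e. α ∈ μ(G)·c·(H₁ ∩ H₂)^♯. -/

import Mathlib

open Pointwise Filter

noncomputable section

/-- Square matrices of size `n` over `R`. -/
abbrev Mat (n : ℕ) (R : Type) : Type := Matrix (Fin n) (Fin n) R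

/-- The set `UT(n,ℝ)` of upper triangular matrices with `1`s on the diagonal. -/
def UTset (n : ℕ) : Set (Mat n ℝ) :=
  {A | (∀ i, A i i = 1) ∧ ∀ i j : Fin n, (j : ℕ) < (i : ℕ) → A i j = 0}

/-- The entries of a matrix, as a point of `ℝ^(n²)`. -/
def matEval {n : ℕ} (A : Mat n ℝ) : Fin n × Fin n → ℝ := fun ij => A ij.1 ij.2

/-- A real unipotent group: a subgroup of `UT(n,ℝ)` which is the common zero set in
`UT(n,ℝ)` of a family of real polynomials in the matrix entries. -/
def IsRealUnipotentGroup (n : ℕ) (G : Set (Mat n ℝ)) : Prop :=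
  (∃ S : Set (MvPolynomial (Fin n × Fin n) ℝ),
      G = {A | A ∈ UTset n ∧ ∀ p ∈ S, MvPolynomial.eval (matEval A) p = 0}) ∧
    (1 : Mat n ℝ) ∈ G ∧ (∀ a ∈ G, ∀ b ∈ G, a * b ∈ G) ∧ ∀ a ∈ G, a⁻¹ ∈ G

/-- A real algebraic subgroup of a real unipotent group `G`. -/
def IsRealAlgSubgroup (n : ℕ) (G H : Set (Mat n ℝ)) : Prop :=
  H ⊆ G ∧ IsRealUnipotentGroup n H

/-- `N` is a normal subgroup-set of `G`. -/
def IsNormalIn (n : ℕ) (G N : Set (Mat n ℝ)) : Prop :=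
  ∀ g ∈ G, ∀ x ∈ N, g * x * g⁻¹ ∈ N

/-- `Γ` is a lattice in `G`: a discrete subgroup which is cocompact, i.e. there is a
compact `K ⊆ G` with `K·Γ = G` (equivalently, `G/Γ` is compact). -/
def IsLatticeIn (n : ℕ) (G Γ : Set (Mat n ℝ)) : Prop :=
  Γ ⊆ G ∧ (1 : Mat n ℝ) ∈ Γ ∧ (∀ a ∈ Γ, ∀ b ∈ Γ, a * b ∈ Γ) ∧ (∀ a ∈ Γ, a⁻¹ ∈ Γ) ∧
    DiscreteTopology ↥Γ ∧
    ∃ K : Set (Mat n ℝ), K ⊆ G ∧ IsCompact K ∧ ∀ g ∈ G, ∃ k ∈ K, ∃ γ ∈ Γ, g = k * γ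

/-- `H` is `Γ`-rational: `Γ ∩ H` is a lattice in `H`. -/
def IsRationalFor (n : ℕ) (Γ H : Set (Mat n ℝ)) : Prop :=
  IsLatticeIn n H (Γ ∩ H)

/-- The hyperreal matrix represented by a sequence of real matrices. -/
def matOfSeq (n : ℕ) (u : ℕ → Mat n ℝ) : Mat n Hyperreal :=
  Matrix.of fun i j => Hyperreal.ofSeq fun k => u k i j

/-- The nonstandard extension `S^♯` of a set `S` of real matrices: hyperreal matrices
represented by sequences landing in `S` on a set of indices in the ultrafilter. -/
def matSharp (n : ℕ) (S : Set (Mat n ℝ)) : Set (Mat n Hyperreal) :=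
  {A | ∃ u : ℕ → Mat n ℝ, (∀ᶠ k in hyperfilter ℕ, u k ∈ S) ∧ A = matOfSeq n u}

/-- The canonical embedding of real matrices into hyperreal matrices. -/
def matCast {n : ℕ} (A : Mat n ℝ) : Mat n Hyperreal :=
  Matrix.of fun i j => (A i j : Hyperreal)

/-- `μ(G)`: elements of `G^♯` all of whose entries are infinitesimally close to the
corresponding entries of the identity matrix. -/
def muSet (n : ℕ) (G : Set (Mat n ℝ)) : Set (Mat n Hyperreal) :=
  {A | A ∈ matSharp n G ∧ ∀ i j, Hyperreal.Infinitesimal (A i j - (1 : Mat n Hyperreal) i j)}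

/-- The coset `gH` is near `α`, i.e. `α ∈ μ(G)·g·H^♯`. -/
def NearCoset (n : ℕ) (G : Set (Mat n ℝ)) (g : Mat n ℝ) (H : Set (Mat n ℝ))
    (α : Mat n Hyperreal) : Prop :=
  α ∈ muSet n G * ({matCast g} * matSharp n H)

/-- The set of standard parts of the finite elements of a set of hyperreal matrices. -/
def matStSet (n : ℕ) (A : Set (Mat n Hyperreal)) : Set (Mat n ℝ) :=
  {B | ∃ a ∈ A, ∀ i j, Hyperreal.IsSt (a i j) (B i j)}

/-- A polynomial map `ℝ^d → Mat n ℝ`. -/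
def IsPolyMapVec (d n : ℕ) (F : (Fin d → ℝ) → Mat n ℝ) : Prop :=
  ∃ P : Fin n → Fin n → MvPolynomial (Fin d) ℝ,
    ∀ x i j, F x i j = MvPolynomial.eval x (P i j)

/-- The inclusion `ℝ →+* ℝ*` as a ring homomorphism. -/
def realHyperRingHom : ℝ →+* Hyperreal where
  toFun r := (r : Hyperreal)
  map_one' := Hyperreal.coe_one
  map_mul' := Hyperreal.coe_mul
  map_zero' := Hyperreal.coe_zero
  map_add' := Hyperreal.coe_add

/-- A semialgebraic subset of matrix space: a finite union of sets defined by finitely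
many polynomial equations and finitely many strict polynomial inequalities. -/
def IsSemialgebraic (n : ℕ) (S : Set (Mat n ℝ)) : Prop :=
  ∃ (k : ℕ) (P Q : Fin k → Finset (MvPolynomial (Fin n × Fin n) ℝ)),
    S = ⋃ t : Fin k, {A | (∀ p ∈ P t, MvPolynomial.eval (matEval A) p = 0) ∧
      ∀ q ∈ Q t, 0 < MvPolynomial.eval (matEval A) q}

/-!
If `e₁ g₁ h₁ = e₂ g₂ h₂` represent `α` with `eᵢ → 1` along the ultrafilter and `hᵢ ∈ Hᵢ`, then
`h₁ h₂⁻¹` converges to `g₁⁻¹ g₂`. The point is that multiplication `H₁ × H₂ → UT(n, ℝ)` is proper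
modulo `H₁ ∩ H₂`: there are `s ∈ H₁ ∩ H₂` such that `h₁ s` converges, necessarily to some `L ∈ H₁`
with `L⁻¹ g₁⁻¹ g₂ ∈ H₂`. Then `g₁ L` lies in both cosets, and writing `h₁ = (h₁ s) s⁻¹` shows that
its coset of `H₁ ∩ H₂` is near `α`.

For properness, start from `s = h₁⁻¹` and `t = h₂` and turn `s t` into `1` one entry at a time,
from the south-west corner upwards, keeping `h₁ s` and `t h₂⁻¹` convergent. If `s t - 1` already
vanishes to the south-west of an entry, that entry is a function of the convergent products, hence
convergent. Moreover, if `a b` is one of the `s t`, the same entry of `a ^ τ b ^ τ - 1` is linear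
in `τ`, so replacing `s` by `s a ^ τ` and `t` by `b ^ τ t` for a convergent `τ` kills it. Real
powers stay inside `H₁` and `H₂` because their entries are polynomial in the exponent: an equation
that holds for all natural exponents holds for all real ones.
-/

section PolynomialPaths

open Polynomial

theorem polynomial_eq_of_forall_eval_natCast {R : Type*} [CommRing R] [IsDomain R] [CharZero R]
    {p q : R[X]} (h : ∀ k : ℕ, p.eval (k : R) = q.eval (k : R)) : p = q :=
  eq_of_infinite_eval_eq p q <|
    (Set.infinite_range_of_injective Nat.cast_injective).mono (Set.range_subset_iff.2 h)

variable {m : Type*} [Fintype m] [DecidableEq m]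

/-- The power `A ^ X` of a matrix `A` with `(A - 1) ^ card m = 0`, as a matrix of polynomials in
the exponent `X`: the binomial series of `(1 + (A - 1)) ^ X`, truncated at `card m`. -/
def powPolynomial (A : Matrix m m ℝ) : Matrix m m ℝ[X] :=
  ∑ k ∈ Finset.range (Fintype.card m), Ring.choose (X : ℝ[X]) k • ((A - 1) ^ k).map C

/-- The real power `A ^ t` of a matrix `A` with `(A - 1) ^ card m = 0`. Defining it by evaluating
`powPolynomial A` makes every polynomial in its entries a polynomial in `t`. -/
def realPow (A : Matrix m m ℝ) (t : ℝ) : Matrix m m ℝ :=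
  (powPolynomial A).map (eval t)

theorem realPow_eq_sum (A : Matrix m m ℝ) (t : ℝ) :
    realPow A t = ∑ k ∈ Finset.range (Fintype.card m), Ring.choose t k • (A - 1) ^ k := by
  ext i j
  simp only [realPow, powPolynomial, Matrix.map_apply, Matrix.sum_apply, Matrix.smul_apply,
    smul_eq_mul, eval_finsetSum, eval_mul, eval_C]
  refine Finset.sum_congr rfl fun k _ => ?_
  rw [← coe_evalRingHom, Ring.map_choose, coe_evalRingHom, eval_X]

theorem realPow_natCast {A : Matrix m m ℝ} (hA : (A - 1) ^ Fintype.card m = 0) (N : ℕ) :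
    realPow A N = A ^ N := by
  have hvanish : ∀ k, k ∉ Finset.range (Fintype.card m) → (A - 1) ^ k = 0 := fun k hk =>
    pow_eq_zero_of_le (by simpa using hk) hA
  calc realPow A N
      = ∑ k ∈ Finset.range (Fintype.card m), N.choose k • (A - 1) ^ k := by
        simp only [realPow_eq_sum, Ring.choose_natCast, Nat.cast_smul_eq_nsmul]
    _ = ∑ᶠ k, N.choose k • (A - 1) ^ k :=
        (finsum_eq_sum_of_support_subset _ <| Function.support_subset_iff'.2 fun k hk => by
          rw [hvanish k (mod_cast hk), smul_zero]).symm
    _ = ∑ k ∈ Finset.range (N + 1), N.choose k • (A - 1) ^ k :=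
        finsum_eq_sum_of_support_subset _ <| Function.support_subset_iff'.2 fun k hk => by
          rw [Nat.choose_eq_zero_of_lt (by simpa using hk), zero_smul]
    _ = ((A - 1) + 1) ^ N := by
        simp only [(Commute.one_right (A - 1)).add_pow, one_pow, mul_one, nsmul_eq_mul']
    _ = A ^ N := by rw [sub_add_cancel]

theorem continuous_realPow (A : Matrix m m ℝ) : Continuous (realPow A) :=
  continuous_matrix fun i j => (powPolynomial A i j).continuous

end PolynomialPaths

section Unitriangular

open OrderDual

variable {R m : Type*} [LinearOrder m]

/-- Upper unitriangular matrices: upper triangular with ones on the diagonal. This is `UTset n`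
for real matrices indexed by `Fin n`. -/
def IsUnitriangular [Zero R] [One R] (A : Matrix m m R) : Prop :=
  A.IsUpperTriangular ∧ ∀ i, A i i = 1

/-- `D` has zero entries at all positions in `S`. The row index is dualized so that `q ≤ p`
says that `q` lies weakly south-west of `p`. -/
def VanishesOn [Zero R] (S : Set (mᵒᵈ × m)) (D : Matrix m m R) : Prop :=
  ∀ q ∈ S, D (ofDual q.1) q.2 = 0

variable [Fintype m]

theorem IsUnitriangular.sub_one_pow_card [CommRing R] {A : Matrix m m R} (hA : IsUnitriangular A) :
    (A - 1) ^ Fintype.card m = 0 := by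
  have hcharpoly : (A - 1).charpoly = Polynomial.X ^ Fintype.card m := by
    rw [Matrix.charpoly_of_isUpperTriangular _ (hA.1.sub Matrix.blockTriangular_one)]
    simp [hA.2]
  simpa [hcharpoly] using (A - 1).aeval_self_charpoly

theorem IsUnitriangular.isUnit [CommRing R] {A : Matrix m m R} (hA : IsUnitriangular A) :
    IsUnit A := by
  rw [Matrix.isUnit_iff_isUnit_det, Matrix.det_of_isUpperTriangular hA.1]
  simp [hA.2]

theorem VanishesOn.mul_mul_apply [Semiring R] {u v D : Matrix m m R} {p : mᵒᵈ × m}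
    (hD : VanishesOn (Set.Iio p) D) (hu : IsUnitriangular u) (hv : IsUnitriangular v) :
    (u * D * v) (ofDual p.1) p.2 = D (ofDual p.1) p.2 := by
  obtain ⟨i, j⟩ := p
  have hzero : ∀ a b, (a, b) ≠ (ofDual i, j) → u (ofDual i) a * D a b * v b j = 0 := by
    intro a b hab
    rcases lt_or_ge a (ofDual i) with hai | hia
    · rw [hu.1 hai, zero_mul, zero_mul]
    rcases lt_or_ge j b with hjb | hbj
    · rw [hv.1 hjb, mul_zero]
    · have hlt : (toDual a, b) < (i, j) := lt_of_le_of_ne (Prod.mk_le_mk.2 ⟨hia, hbj⟩) hab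
      rw [show D a b = 0 from hD _ hlt, mul_zero, zero_mul]
  simp only [Matrix.mul_apply, Finset.sum_mul]
  rw [Finset.sum_eq_single j, Finset.sum_eq_single (ofDual i)]
  · rw [hu.2, hv.2, one_mul, mul_one]
  · exact fun a _ ha => hzero a j (by simp [ha])
  · simp
  · exact fun b _ hb => Finset.sum_eq_zero fun a _ => hzero a b (by simp [hb])
  · simp

theorem VanishesOn.mul_mul [Semiring R] {u v D : Matrix m m R} {S : Set (mᵒᵈ × m)}
    (hD : VanishesOn S D) (hS : IsLowerSet S) (hu : IsUnitriangular u) (hv : IsUnitriangular v) :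
    VanishesOn S (u * D * v) := fun q hq => by
  have hIio : VanishesOn (Set.Iio q) D := fun r hr => hD r (hS (le_of_lt hr) hq)
  rw [hIio.mul_mul_apply hu hv, hD q hq]

theorem pow_mul_pow_sub_one_apply [Ring R] {a b : Matrix m m R} {p : mᵒᵈ × m}
    (ha : IsUnitriangular a) (hb : IsUnitriangular b) (hab : VanishesOn (Set.Iio p) (a * b - 1))
    (N : ℕ) : ∀ q ≤ p,
      (a ^ N * b ^ N - 1) (ofDual q.1) q.2 = N * (a * b - 1) (ofDual q.1) q.2 := by
  induction N with
  | zero => simp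
  | succ N ih =>
    intro q hq
    have hIio : VanishesOn (Set.Iio q) (a ^ N * b ^ N - 1) := fun r hr => by
      have hrp : r < p := lt_of_lt_of_le hr hq
      rw [ih r hrp.le, hab r hrp, mul_zero]
    have hsplit : a ^ (N + 1) * b ^ (N + 1) - 1 = a * (a ^ N * b ^ N - 1) * b + (a * b - 1) := by
      rw [pow_succ', pow_succ]
      noncomm_ring
    rw [hsplit, Matrix.add_apply, hIio.mul_mul_apply ha hb, ih q hq, Nat.cast_succ, add_one_mul]

theorem realPow_mul_realPow_sub_one_apply {a b : Matrix m m ℝ} {p : mᵒᵈ × m}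
    (ha : IsUnitriangular a) (hb : IsUnitriangular b) (hab : VanishesOn (Set.Iio p) (a * b - 1))
    (t : ℝ) : (realPow a t * realPow b t - 1) (ofDual p.1) p.2 =
      t * (a * b - 1) (ofDual p.1) p.2 := by
  set P : Polynomial ℝ := (powPolynomial a * powPolynomial b - 1) (ofDual p.1) p.2
  have heval : ∀ r, P.eval r = (realPow a r * realPow b r - 1) (ofDual p.1) p.2 := fun r => by
    simp only [realPow, ← Polynomial.coe_evalRingHom, ← RingHom.mapMatrix_apply, ← map_mul]
    rw [← map_one (Polynomial.evalRingHom r).mapMatrix, ← map_sub]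
    rfl
  have hP : P = Polynomial.X * Polynomial.C ((a * b - 1) (ofDual p.1) p.2) :=
    polynomial_eq_of_forall_eval_natCast fun N => by
      rw [heval, realPow_natCast ha.sub_one_pow_card, realPow_natCast hb.sub_one_pow_card,
        pow_mul_pow_sub_one_apply ha hb hab N p le_rfl]
      simp
  rw [← heval, hP, Polynomial.eval_mul, Polynomial.eval_X, Polynomial.eval_C]

theorem vanishesOn_insert_realPow_correction {a b s t : Matrix m m ℝ} {p : mᵒᵈ × m}
    {T : Set (mᵒᵈ × m)} {τ : ℝ} (hT : IsLowerSet T) (hp : Set.Iio p ⊆ T)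
    (ha : IsUnitriangular a) (hb : IsUnitriangular b)
    (hs : IsUnitriangular s) (ht : IsUnitriangular t)
    (hab : VanishesOn T (a * b - 1)) (hst : VanishesOn T (s * t - 1))
    (hτ : τ * (a * b - 1) (ofDual p.1) p.2 = -(s * t - 1) (ofDual p.1) p.2) :
    VanishesOn (insert p T) (s * realPow a τ * (realPow b τ * t) - 1) := by
  have hsplit : s * realPow a τ * (realPow b τ * t) - 1 =
      (s * t - 1) + s * (realPow a τ * realPow b τ - 1) * t := by
    noncomm_ring
  have hpow : VanishesOn T (realPow a τ * realPow b τ - 1) := fun q hq => by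
    have hIio : VanishesOn (Set.Iio q) (a * b - 1) := fun r hr => hab r (hT (le_of_lt hr) hq)
    rw [realPow_mul_realPow_sub_one_apply ha hb hIio, hab q hq, mul_zero]
  rw [hsplit]
  rintro q (rfl | hq)
  · have hpow_q : VanishesOn (Set.Iio q) (realPow a τ * realPow b τ - 1) :=
      fun r hr => hpow r (hp hr)
    have hab_q : VanishesOn (Set.Iio q) (a * b - 1) := fun r hr => hab r (hp hr)
    rw [Matrix.add_apply, hpow_q.mul_mul_apply hs ht,
      realPow_mul_realPow_sub_one_apply ha hb hab_q, hτ, add_neg_cancel]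
  · rw [Matrix.add_apply, hst q hq, hpow.mul_mul hT hs ht q hq, add_zero]

end Unitriangular

theorem mem_UTset_iff {n : ℕ} {A : Mat n ℝ} : A ∈ UTset n ↔ IsUnitriangular A :=
  ⟨fun h => ⟨fun i j => h.2 i j, h.1⟩, fun h => ⟨h.2, fun _ _ hij => h.1 hij⟩⟩

section MatrixGroup

variable {R m : Type*} [CommRing R] [Fintype m] [DecidableEq m]

/-- `G` is a group of invertible matrices under matrix multiplication. It is a predicate on sets of
matrices, so that it applies to real unipotent groups and their intersections as they stand. -/
structure IsMatrixGroup (G : Set (Matrix m m R)) : Prop where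
  isUnit : ∀ {a}, a ∈ G → IsUnit a
  one_mem : 1 ∈ G
  mul_mem : ∀ {a b}, a ∈ G → b ∈ G → a * b ∈ G
  inv_mem : ∀ {a}, a ∈ G → a⁻¹ ∈ G

namespace IsMatrixGroup

variable {G H H₁ H₂ : Set (Matrix m m R)} {a b c g g₁ g₂ : Matrix m m R}

theorem mul_inv_cancel (hG : IsMatrixGroup G) (ha : a ∈ G) : a * a⁻¹ = 1 :=
  a.mul_nonsing_inv ((Matrix.isUnit_iff_isUnit_det a).1 (hG.isUnit ha))

theorem inv_mul_cancel (hG : IsMatrixGroup G) (ha : a ∈ G) : a⁻¹ * a = 1 :=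
  a.nonsing_inv_mul ((Matrix.isUnit_iff_isUnit_det a).1 (hG.isUnit ha))

theorem mul_inv_cancel_left (hG : IsMatrixGroup G) (ha : a ∈ G) (b : Matrix m m R) :
    a * (a⁻¹ * b) = b := by
  rw [← mul_assoc, hG.mul_inv_cancel ha, one_mul]

theorem inv_mul_cancel_left (hG : IsMatrixGroup G) (ha : a ∈ G) (b : Matrix m m R) :
    a⁻¹ * (a * b) = b := by
  rw [← mul_assoc, hG.inv_mul_cancel ha, one_mul]

theorem pow_mem (hG : IsMatrixGroup G) (ha : a ∈ G) (N : ℕ) : a ^ N ∈ G := by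
  induction N with
  | zero => simpa only [pow_zero] using hG.one_mem
  | succ N ih => simpa only [pow_succ] using hG.mul_mem ih ha

theorem inter (h₁ : IsMatrixGroup H₁) (h₂ : IsMatrixGroup H₂) : IsMatrixGroup (H₁ ∩ H₂) where
  isUnit ha := h₁.isUnit ha.1
  one_mem := ⟨h₁.one_mem, h₂.one_mem⟩
  mul_mem ha hb := ⟨h₁.mul_mem ha.1 hb.1, h₂.mul_mem ha.2 hb.2⟩
  inv_mem ha := ⟨h₁.inv_mem ha.1, h₂.inv_mem ha.2⟩

theorem singleton_mul_eq_of_mem (hH : IsMatrixGroup H) (hc : c ∈ ({g} * H : Set _)) :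
    ({g} * H : Set (Matrix m m R)) = {c} * H := by
  rw [Set.singleton_mul] at hc
  obtain ⟨a, ha, rfl⟩ := hc
  simp only [Set.singleton_mul]
  refine Set.Subset.antisymm ?_ ?_
  · rintro _ ⟨b, hb, rfl⟩
    exact ⟨a⁻¹ * b, hH.mul_mem (hH.inv_mem ha) hb, by
      simp only [mul_assoc, hH.mul_inv_cancel_left ha]⟩
  · rintro _ ⟨b, hb, rfl⟩
    exact ⟨a * b, hH.mul_mem ha hb, (mul_assoc g a b).symm⟩

theorem singleton_mul_inter_singleton_mul (h₁ : IsMatrixGroup H₁) (h₂ : IsMatrixGroup H₂)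
    (hc : c ∈ ({g₁} * H₁ : Set _) ∩ ({g₂} * H₂)) (hunit : IsUnit c) :
    ({g₁} * H₁ : Set _) ∩ ({g₂} * H₂) = {c} * (H₁ ∩ H₂) := by
  rw [h₁.singleton_mul_eq_of_mem hc.1, h₂.singleton_mul_eq_of_mem hc.2]
  simp only [Set.singleton_mul, Set.image_inter hunit.mul_right_injective]

end IsMatrixGroup

end MatrixGroup

section RealUnipotent

open Topology MvPolynomial

variable {n : ℕ} {H : Set (Mat n ℝ)} {A : Mat n ℝ}

theorem exists_mem_UTset_iff_forall_eval_eq_zero (n : ℕ) :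
    ∃ S : Set (MvPolynomial (Fin n × Fin n) ℝ),
      ∀ A, A ∈ UTset n ↔ ∀ p ∈ S, eval (matEval A) p = 0 := by
  refine ⟨Set.range (fun i => X (i, i) - 1) ∪ X '' {ij | ij.2 < ij.1}, fun A => ?_⟩
  simp only [Set.mem_union, or_imp, forall_and, Set.forall_mem_range, Set.forall_mem_image,
    Prod.forall]
  simp [UTset, matEval, sub_eq_zero]

theorem eval_matEval_realPow (A : Mat n ℝ) (p : MvPolynomial (Fin n × Fin n) ℝ) (t : ℝ) :
    eval (matEval (realPow A t)) p =
      (aeval (fun ij : Fin n × Fin n => powPolynomial A ij.1 ij.2) p).eval t := by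
  rw [← Polynomial.coe_aeval_eq_eval, comp_aeval_apply, aeval_eq_eval]
  rfl

theorem continuous_eval_matEval (p : MvPolynomial (Fin n × Fin n) ℝ) :
    Continuous fun A : Mat n ℝ => eval (matEval A) p :=
  (continuous_eval p).comp (continuous_pi fun ij => continuous_id.matrix_elem ij.1 ij.2)

namespace IsRealUnipotentGroup

theorem isUnitriangular (hH : IsRealUnipotentGroup n H) (hA : A ∈ H) : IsUnitriangular A := by
  obtain ⟨⟨S, rfl⟩, -⟩ := hH
  exact mem_UTset_iff.1 hA.1

theorem isMatrixGroup (hH : IsRealUnipotentGroup n H) : IsMatrixGroup H where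
  isUnit hA := (hH.isUnitriangular hA).isUnit
  one_mem := hH.2.1
  mul_mem ha hb := hH.2.2.1 _ ha _ hb
  inv_mem ha := hH.2.2.2 _ ha

theorem exists_mem_iff_forall_eval_eq_zero (hH : IsRealUnipotentGroup n H) :
    ∃ S : Set (MvPolynomial (Fin n × Fin n) ℝ), ∀ A, A ∈ H ↔ ∀ p ∈ S, eval (matEval A) p = 0 := by
  obtain ⟨⟨S, rfl⟩, -⟩ := hH
  obtain ⟨S₀, hS₀⟩ := exists_mem_UTset_iff_forall_eval_eq_zero n
  exact ⟨S₀ ∪ S, fun A => by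
    simp only [Set.mem_ofPred_eq, hS₀, Set.mem_union, or_imp, forall_and]⟩

theorem isClosed (hH : IsRealUnipotentGroup n H) : IsClosed H := by
  obtain ⟨S, hS⟩ := hH.exists_mem_iff_forall_eval_eq_zero
  have hinter : H = ⋂ p ∈ S, {A | eval (matEval A) p = 0} := by ext A; simp [hS]
  rw [hinter]
  exact isClosed_biInter fun p _ => isClosed_eq (continuous_eval_matEval p) continuous_const

theorem realPow_natCast (hH : IsRealUnipotentGroup n H) (hA : A ∈ H) (N : ℕ) :
    realPow A N = A ^ N :=
  _root_.realPow_natCast (hH.isUnitriangular hA).sub_one_pow_card N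

theorem realPow_mem (hH : IsRealUnipotentGroup n H) (hA : A ∈ H) (t : ℝ) : realPow A t ∈ H := by
  obtain ⟨S, hS⟩ := hH.exists_mem_iff_forall_eval_eq_zero
  refine (hS _).2 fun p hp => ?_
  have hzero : aeval (fun ij : Fin n × Fin n => powPolynomial A ij.1 ij.2) p = 0 :=
    polynomial_eq_of_forall_eval_natCast fun N => by
      rw [← eval_matEval_realPow, hH.realPow_natCast hA, Polynomial.eval_zero]
      exact (hS _).1 (hH.isMatrixGroup.pow_mem hA N) p hp
  rw [eval_matEval_realPow, hzero, Polynomial.eval_zero]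

end IsRealUnipotentGroup

end RealUnipotent

section Infinitesimal

open Topology

theorem tendsto_matrix_nhds {ι l m R : Type*} [TopologicalSpace R] {F : Filter ι}
    {u : ι → Matrix l m R} {A : Matrix l m R} :
    Tendsto u F (𝓝 A) ↔ ∀ i j, Tendsto (fun k => u k i j) F (𝓝 (A i j)) :=
  tendsto_pi_nhds.trans (forall_congr' fun _ => tendsto_pi_nhds)

variable {n : ℕ} {G S : Set (Mat n ℝ)}

theorem matOfSeq_eq_matOfSeq_iff {u v : ℕ → Mat n ℝ} :
    matOfSeq n u = matOfSeq n v ↔ ∀ᶠ k in hyperfilter ℕ, u k = v k := by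
  simp only [← Matrix.ext_iff, eventually_all, matOfSeq, Matrix.of_apply]
  exact forall₂_congr fun i j => Germ.coe_eq

theorem matOfSeq_mul (u v : ℕ → Mat n ℝ) :
    matOfSeq n (fun k => u k * v k) = matOfSeq n u * matOfSeq n v := by
  ext i j
  have hsum : (fun k => (u k * v k) i j) = ∑ l, (fun k => u k i l) * fun k => v k l j := by
    ext k
    simp [Matrix.mul_apply]
  change Germ.coeRingHom _ (fun k => (u k * v k) i j) = _
  rw [hsum, map_sum]
  simp only [map_mul]
  rfl

theorem mem_matSharp_iff_of_nonempty (hS : S.Nonempty) {A : Mat n Hyperreal} :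
    A ∈ matSharp n S ↔ ∃ u : ℕ → Mat n ℝ, (∀ k, u k ∈ S) ∧ A = matOfSeq n u := by
  classical
  refine ⟨?_, fun ⟨u, hu, hA⟩ => ⟨u, Eventually.of_forall hu, hA⟩⟩
  rintro ⟨u, hu, rfl⟩
  obtain ⟨x, hx⟩ := hS
  refine ⟨fun k => if u k ∈ S then u k else x, fun k => ?_, matOfSeq_eq_matOfSeq_iff.2 ?_⟩
  · dsimp only
    split_ifs with hk
    exacts [hk, hx]
  · filter_upwards [hu] with k hk
    rw [if_pos hk]

theorem matCast_eq_matOfSeq (A : Mat n ℝ) : matCast A = matOfSeq n fun _ => A := rfl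

theorem matCast_one : matCast (1 : Mat n ℝ) = 1 := by
  ext i j
  rcases eq_or_ne i j with rfl | hij
  · simp [matCast]
  · simp [matCast, Matrix.one_apply_ne hij]

theorem matOfSeq_mem_muSet {u : ℕ → Mat n ℝ} :
    matOfSeq n u ∈ muSet n G ↔ matOfSeq n u ∈ matSharp n G ∧ Tendsto u (hyperfilter ℕ) (𝓝 1) := by
  refine and_congr_right fun _ => ?_
  rw [tendsto_matrix_nhds]
  refine forall₂_congr fun i j => ?_
  rw [← matCast_one, ← tendsto_sub_nhds_zero_iff]
  exact Hyperreal.isSt_ofSeq_iff_tendsto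

end Infinitesimal

section Properness

open Topology OrderDual

theorem isLowerSet_induction {α : Type*} [PartialOrder α] [Finite α] {P : Set α → Prop}
    (empty : P ∅)
    (insert : ∀ p T, IsLowerSet T → Set.Iio p ⊆ T → P T → P (insert p T))
    {S : Set α} (hS : IsLowerSet S) : P S := by
  induction S using WellFoundedLT.induction with
  | ind S ih =>
    rcases S.eq_empty_or_nonempty with rfl | hne
    · exact empty
    obtain ⟨p, hp⟩ := S.toFinite.exists_maximal hne
    have hlower : IsLowerSet (S \ {p}) := hS.erase fun q hq hpq => hp.eq_of_ge hq hpq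
    have hIio : Set.Iio p ⊆ S \ {p} := fun q hq => ⟨hS (le_of_lt hq) hp.prop, ne_of_lt hq⟩
    rw [← Set.insert_sdiff_self_of_mem hp.prop]
    exact insert p _ hlower hIio (ih _ (Set.sdiff_singleton_ssubset.2 hp.prop) hlower)

/-- The pair `(s, t)` of sequences in `H₁` and `H₂` corrects `(h, g)` on `S`: the products `h * s`
and `t * g` converge, and `t` agrees with the inverse of `s` as far as the entries of `s * t` in `S`
are concerned. Once `S` contains all positions, `h * g = (h * s) * (t * g)` with both factors
convergent and `t = s⁻¹` in `H₁ ∩ H₂`. -/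
structure IsCorrectionOn {κ : Type*} {n : ℕ} (l : Filter κ) (H₁ H₂ : Set (Mat n ℝ))
    (h g : κ → Mat n ℝ) (S : Set ((Fin n)ᵒᵈ × Fin n)) (s t : κ → Mat n ℝ) : Prop where
  left_mem : ∀ k, s k ∈ H₁
  right_mem : ∀ k, t k ∈ H₂
  vanishesOn : ∀ k, VanishesOn S (s k * t k - 1)
  exists_tendsto_left : ∃ L, Tendsto (fun k => h k * s k) l (𝓝 L)
  exists_tendsto_right : ∃ L, Tendsto (fun k => t k * g k) l (𝓝 L)

variable {κ : Type*} {l : Filter κ} {n : ℕ} {H₁ H₂ : Set (Mat n ℝ)} {h g s t : κ → Mat n ℝ}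
  {L : Mat n ℝ} {S T : Set ((Fin n)ᵒᵈ × Fin n)} {p : (Fin n)ᵒᵈ × Fin n}

theorem IsCorrectionOn.exists_tendsto_apply (hst : IsCorrectionOn l H₁ H₂ h g T s t)
    (hp : Set.Iio p ⊆ T) (hh : ∀ k, IsUnitriangular (h k)) (hg : ∀ k, IsUnitriangular (g k))
    (hL : Tendsto (fun k => h k * g k) l (𝓝 L)) :
    ∃ x, Tendsto (fun k => (s k * t k - 1) (ofDual p.1) p.2) l (𝓝 x) := by
  obtain ⟨L₁, hL₁⟩ := hst.exists_tendsto_left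
  obtain ⟨L₂, hL₂⟩ := hst.exists_tendsto_right
  refine ⟨_, (tendsto_matrix_nhds.1 ((hL₁.mul hL₂).sub hL) (ofDual p.1) p.2).congr fun k => ?_⟩
  have hvanish : VanishesOn (Set.Iio p) (s k * t k - 1) := fun q hq => hst.vanishesOn k q (hp hq)
  have hsplit : h k * s k * (t k * g k) - h k * g k = h k * (s k * t k - 1) * g k := by
    noncomm_ring
  rw [hsplit, hvanish.mul_mul_apply (hh k) (hg k)]

theorem IsCorrectionOn.exists_insert (hst : IsCorrectionOn l H₁ H₂ h g T s t)
    (hH₁ : IsRealUnipotentGroup n H₁) (hH₂ : IsRealUnipotentGroup n H₂)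
    (hT : IsLowerSet T) (hp : Set.Iio p ⊆ T) (hh : ∀ k, IsUnitriangular (h k))
    (hg : ∀ k, IsUnitriangular (g k))
    (hL : Tendsto (fun k => h k * g k) l (𝓝 L)) :
    ∃ s' t', IsCorrectionOn l H₁ H₂ h g (insert p T) s' t' := by
  by_cases hc : ∀ k, (s k * t k - 1) (ofDual p.1) p.2 = 0
  · refine ⟨s, t, { hst with vanishesOn := fun k => ?_ }⟩
    rintro q (rfl | hq)
    exacts [hc k, hst.vanishesOn k q hq]
  push Not at hc
  obtain ⟨k₀, hk₀⟩ := hc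
  let τ (k : κ) : ℝ :=
    -(s k * t k - 1) (ofDual p.1) p.2 / (s k₀ * t k₀ - 1) (ofDual p.1) p.2
  obtain ⟨x, hx⟩ := hst.exists_tendsto_apply hp hh hg hL
  obtain ⟨y, hτ⟩ : ∃ y, Tendsto τ l (𝓝 y) := ⟨_, hx.neg.div_const _⟩
  refine ⟨fun k => s k * realPow (s k₀) (τ k), fun k => realPow (t k₀) (τ k) * t k, ?_, ?_, ?_,
    ?_, ?_⟩
  · exact fun k => hH₁.isMatrixGroup.mul_mem (hst.left_mem k) (hH₁.realPow_mem (hst.left_mem k₀) _)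
  · exact fun k =>
      hH₂.isMatrixGroup.mul_mem (hH₂.realPow_mem (hst.right_mem k₀) _) (hst.right_mem k)
  · have hs k := hH₁.isUnitriangular (hst.left_mem k)
    have ht k := hH₂.isUnitriangular (hst.right_mem k)
    exact fun k => vanishesOn_insert_realPow_correction hT hp (hs k₀) (ht k₀) (hs k) (ht k)
      (hst.vanishesOn k₀) (hst.vanishesOn k) (div_mul_cancel₀ _ hk₀)
  · obtain ⟨L₁, hL₁⟩ := hst.exists_tendsto_left
    exact ⟨_, (hL₁.mul (((continuous_realPow (s k₀)).tendsto y).comp hτ)).congr fun k =>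
      mul_assoc _ _ _⟩
  · obtain ⟨L₂, hL₂⟩ := hst.exists_tendsto_right
    exact ⟨_, ((((continuous_realPow (t k₀)).tendsto y).comp hτ).mul hL₂).congr fun k =>
      (mul_assoc _ _ _).symm⟩

theorem exists_isCorrectionOn (hH₁ : IsRealUnipotentGroup n H₁) (hH₂ : IsRealUnipotentGroup n H₂)
    (hh : ∀ k, h k ∈ H₁) (hg : ∀ k, g k ∈ H₂) (hL : Tendsto (fun k => h k * g k) l (𝓝 L))
    (hS : IsLowerSet S) : ∃ s t, IsCorrectionOn l H₁ H₂ h g S s t := by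
  refine isLowerSet_induction (P := fun S => ∃ s t, IsCorrectionOn l H₁ H₂ h g S s t) ?_
    (fun p T hT hp => ?_) hS
  · exact ⟨fun k => (h k)⁻¹, fun k => (g k)⁻¹, {
      left_mem := fun k => hH₁.isMatrixGroup.inv_mem (hh k)
      right_mem := fun k => hH₂.isMatrixGroup.inv_mem (hg k)
      vanishesOn := fun k q hq => hq.elim
      exists_tendsto_left := ⟨1, by
        simp only [hH₁.isMatrixGroup.mul_inv_cancel (hh _), tendsto_const_nhds]⟩
      exists_tendsto_right := ⟨1, by
        simp only [hH₂.isMatrixGroup.inv_mul_cancel (hg _), tendsto_const_nhds]⟩ }⟩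
  · rintro ⟨s, t, hst⟩
    exact hst.exists_insert hH₁ hH₂ hT hp (fun k => hH₁.isUnitriangular (hh k))
      (fun k => hH₂.isUnitriangular (hg k)) hL

theorem exists_tendsto_mul_of_tendsto_mul [l.NeBot] (hH₁ : IsRealUnipotentGroup n H₁)
    (hH₂ : IsRealUnipotentGroup n H₂) (hh : ∀ k, h k ∈ H₁) (hg : ∀ k, g k ∈ H₂)
    (hL : Tendsto (fun k => h k * g k) l (𝓝 L)) :
    ∃ s : κ → Mat n ℝ, (∀ k, s k ∈ H₁ ∩ H₂) ∧
      ∃ L₁ ∈ H₁, ∃ L₂ ∈ H₂, L₁ * L₂ = L ∧ Tendsto (fun k => h k * s k) l (𝓝 L₁) := by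
  obtain ⟨s, t, hst⟩ := exists_isCorrectionOn hH₁ hH₂ hh hg hL isLowerSet_univ
  obtain ⟨L₁, hL₁⟩ := hst.exists_tendsto_left
  obtain ⟨L₂, hL₂⟩ := hst.exists_tendsto_right
  have hone : ∀ k, s k * t k = 1 := fun k =>
    sub_eq_zero.1 <| Matrix.ext fun i j => hst.vanishesOn k (toDual i, j) trivial
  have hs : ∀ k, s k ∈ H₂ := fun k => by
    rw [← Matrix.inv_eq_left_inv (hone k)]
    exact hH₂.isMatrixGroup.inv_mem (hst.right_mem k)
  have hprod : ∀ k, h k * s k * (t k * g k) = h k * g k := fun k => by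
    rw [mul_assoc, ← mul_assoc (s k), hone, one_mul]
  refine ⟨s, fun k => ⟨hst.left_mem k, hs k⟩, L₁, ?_, L₂, ?_, ?_, hL₁⟩
  · exact hH₁.isClosed.mem_of_tendsto hL₁ <| Eventually.of_forall fun k =>
      hH₁.isMatrixGroup.mul_mem (hh k) (hst.left_mem k)
  · exact hH₂.isClosed.mem_of_tendsto hL₂ <| Eventually.of_forall fun k =>
      hH₂.isMatrixGroup.mul_mem (hst.right_mem k) (hg k)
  · exact tendsto_nhds_unique ((hL₁.mul hL₂).congr hprod) hL

end Properness

section Near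

open Topology

theorem tendsto_matrix_inv {κ : Type*} {l : Filter κ} {m : Type*} [Fintype m] [DecidableEq m]
    {u : κ → Matrix m m ℝ} {A : Matrix m m ℝ} (hu : Tendsto u l (𝓝 A)) (hA : IsUnit A) :
    Tendsto (fun k => (u k)⁻¹) l (𝓝 A⁻¹) := by
  obtain ⟨d, hd⟩ := (Matrix.isUnit_iff_isUnit_det A).1 hA
  exact (continuousAt_matrix_inv A (hd ▸ NormedRing.inverse_continuousAt d)).tendsto.comp hu

variable {n : ℕ} {G H H₁ H₂ : Set (Mat n ℝ)} {c g g₁ g₂ : Mat n ℝ} {α : Mat n Hyperreal}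

theorem nearCoset_iff (hG : G.Nonempty) (hH : H.Nonempty) :
    NearCoset n G g H α ↔ ∃ e h : ℕ → Mat n ℝ, (∀ k, e k ∈ G) ∧ (∀ k, h k ∈ H) ∧
      Tendsto e (hyperfilter ℕ) (𝓝 1) ∧ α = matOfSeq n fun k => e k * (g * h k) := by
  simp only [matOfSeq_mul, ← matCast_eq_matOfSeq]
  constructor
  · rintro ⟨ε, hε, _, ⟨_, rfl, η, hη, rfl⟩, rfl⟩
    obtain ⟨e, he, rfl⟩ := (mem_matSharp_iff_of_nonempty hG).1 hε.1
    obtain ⟨h, hh, rfl⟩ := (mem_matSharp_iff_of_nonempty hH).1 hη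
    exact ⟨e, h, he, hh, (matOfSeq_mem_muSet.1 hε).2, rfl⟩
  · rintro ⟨e, h, he, hh, hlim, rfl⟩
    exact Set.mul_mem_mul
      (matOfSeq_mem_muSet.2 ⟨(mem_matSharp_iff_of_nonempty hG).2 ⟨e, he, rfl⟩, hlim⟩)
      (Set.mul_mem_mul rfl ((mem_matSharp_iff_of_nonempty hH).2 ⟨h, hh, rfl⟩))

theorem NearCoset.of_mem (hnear : NearCoset n G g H α) (hG : G.Nonempty) (hH : IsMatrixGroup H)
    (hc : c ∈ ({g} * H : Set _)) : NearCoset n G c H α := by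
  rw [Set.singleton_mul] at hc
  obtain ⟨a, ha, rfl⟩ := hc
  have hne : H.Nonempty := ⟨1, hH.one_mem⟩
  obtain ⟨e, h, he, hh, hlim, rfl⟩ := (nearCoset_iff hG hne).1 hnear
  refine (nearCoset_iff hG hne).2
    ⟨e, fun k => a⁻¹ * h k, he, fun k => hH.mul_mem (hH.inv_mem ha) (hh k), hlim, ?_⟩
  simp only [mul_assoc, hH.mul_inv_cancel_left ha]

theorem tendsto_mul_inv_of_matOfSeq_eq (hG : IsMatrixGroup G) (hg₁ : g₁ ∈ G)
    {e₁ e₂ h₁ h₂ : ℕ → Mat n ℝ} (he₁ : ∀ k, e₁ k ∈ G) (hh₂ : ∀ k, h₂ k ∈ G)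
    (hlim₁ : Tendsto e₁ (hyperfilter ℕ) (𝓝 1))
    (hlim₂ : Tendsto e₂ (hyperfilter ℕ) (𝓝 1))
    (heq : matOfSeq n (fun k => e₁ k * (g₁ * h₁ k)) = matOfSeq n fun k => e₂ k * (g₂ * h₂ k)) :
    Tendsto (fun k => h₁ k * (h₂ k)⁻¹) (hyperfilter ℕ) (𝓝 (g₁⁻¹ * g₂)) := by
  have hlim : Tendsto (fun k => (e₁ k * g₁)⁻¹ * (e₂ k * g₂)) (hyperfilter ℕ)
      (𝓝 ((1 * g₁)⁻¹ * (1 * g₂))) :=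
    (tendsto_matrix_inv (hlim₁.mul_const g₁) (hG.isUnit (hG.mul_mem hG.one_mem hg₁))).mul
      (hlim₂.mul_const g₂)
  rw [one_mul, one_mul] at hlim
  refine hlim.congr' ?_
  filter_upwards [matOfSeq_eq_matOfSeq_iff.1 heq] with k hk
  calc (e₁ k * g₁)⁻¹ * (e₂ k * g₂)
      = (e₁ k * g₁)⁻¹ * (e₂ k * (g₂ * h₂ k) * (h₂ k)⁻¹) := by
        simp only [mul_assoc, hG.mul_inv_cancel (hh₂ k), mul_one]
    _ = (e₁ k * g₁)⁻¹ * (e₁ k * g₁ * (h₁ k * (h₂ k)⁻¹)) := by rw [← hk]; simp only [mul_assoc]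
    _ = h₁ k * (h₂ k)⁻¹ := hG.inv_mul_cancel_left (hG.mul_mem (he₁ k) hg₁) _

theorem exists_mem_inter_nearCoset (hG : IsMatrixGroup G) (hH₁ : IsRealAlgSubgroup n G H₁)
    (hH₂ : IsRealAlgSubgroup n G H₂) (hg₁ : g₁ ∈ G) (hnear₁ : NearCoset n G g₁ H₁ α)
    (hnear₂ : NearCoset n G g₂ H₂ α) :
    ∃ c ∈ ({g₁} * H₁ : Set _) ∩ ({g₂} * H₂), NearCoset n G c (H₁ ∩ H₂) α := by
  have hgrp₁ := hH₁.2.isMatrixGroup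
  have hgrp₂ := hH₂.2.isMatrixGroup
  have hGne : G.Nonempty := ⟨1, hG.one_mem⟩
  obtain ⟨e₁, h₁, he₁, hh₁, hlim₁, rfl⟩ := (nearCoset_iff hGne ⟨1, hgrp₁.one_mem⟩).1 hnear₁
  obtain ⟨e₂, h₂, -, hh₂, hlim₂, heq⟩ := (nearCoset_iff hGne ⟨1, hgrp₂.one_mem⟩).1 hnear₂
  obtain ⟨s, hs, L₁, hL₁, L₂, hL₂, hL, hlim⟩ :=
    exists_tendsto_mul_of_tendsto_mul hH₁.2 hH₂.2 hh₁ (fun k => hgrp₂.inv_mem (hh₂ k))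
      (tendsto_mul_inv_of_matOfSeq_eq hG hg₁ he₁ (fun k => hH₂.1 (hh₂ k)) hlim₁ hlim₂ heq)
  have hc : g₁ * L₁ ∈ G := hG.mul_mem hg₁ (hH₁.1 hL₁)
  have hc₂ : g₂ * L₂⁻¹ = g₁ * L₁ := by
    rw [← hG.mul_inv_cancel_left hg₁ g₂, ← hL, mul_assoc, mul_assoc, hgrp₂.mul_inv_cancel hL₂,
      mul_one]
  refine ⟨g₁ * L₁, ⟨Set.mul_mem_mul rfl hL₁, hc₂ ▸ Set.mul_mem_mul rfl (hgrp₂.inv_mem hL₂)⟩, ?_⟩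
  refine (nearCoset_iff hGne ⟨1, (hgrp₁.inter hgrp₂).one_mem⟩).2
    ⟨fun k => e₁ k * (g₁ * (h₁ k * s k)) * (g₁ * L₁)⁻¹, fun k => (s k)⁻¹, fun k => ?_,
      fun k => (hgrp₁.inter hgrp₂).inv_mem (hs k), ?_, ?_⟩
  · exact hG.mul_mem (hG.mul_mem (he₁ k)
      (hG.mul_mem hg₁ (hH₁.1 (hgrp₁.mul_mem (hh₁ k) (hs k).1)))) (hG.inv_mem hc)
  · simpa only [one_mul, hG.mul_inv_cancel hc] using
      (hlim₁.mul (hlim.const_mul g₁)).mul_const (g₁ * L₁)⁻¹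
  · congr 1 with k : 1
    rw [mul_assoc _ (g₁ * L₁)⁻¹, mul_assoc g₁ L₁, ← mul_assoc g₁ L₁, hG.inv_mul_cancel_left hc]
    simp only [mul_assoc, hgrp₁.mul_inv_cancel (hs k).1, mul_one]

theorem stmt1_general (hG : IsMatrixGroup G) (hH₁ : IsRealAlgSubgroup n G H₁)
    (hH₂ : IsRealAlgSubgroup n G H₂) (hg₁ : g₁ ∈ G) (hnear₁ : NearCoset n G g₁ H₁ α)
    (hnear₂ : NearCoset n G g₂ H₂ α) :
    (({g₁} * H₁) ∩ ({g₂} * H₂)).Nonempty ∧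
    ∀ c ∈ ({g₁} * H₁) ∩ ({g₂} * H₂),
      ({g₁} * H₁) ∩ ({g₂} * H₂) = {c} * (H₁ ∩ H₂) ∧ NearCoset n G c (H₁ ∩ H₂) α := by
  obtain ⟨c₀, hc₀, hnear⟩ := exists_mem_inter_nearCoset hG hH₁ hH₂ hg₁ hnear₁ hnear₂
  have hgrp₁ := hH₁.2.isMatrixGroup
  have hgrp₂ := hH₂.2.isMatrixGroup
  have hinter : ∀ c ∈ ({g₁} * H₁) ∩ ({g₂} * H₂),
      ({g₁} * H₁) ∩ ({g₂} * H₂) = {c} * (H₁ ∩ H₂) := fun c hc => by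
    obtain ⟨_, rfl, a, ha, rfl⟩ := hc.1
    exact hgrp₁.singleton_mul_inter_singleton_mul hgrp₂ hc (hG.isUnit (hG.mul_mem hg₁ (hH₁.1 ha)))
  exact ⟨⟨c₀, hc₀⟩, fun c hc => ⟨hinter c hc,
    hnear.of_mem ⟨1, hG.one_mem⟩ (hgrp₁.inter hgrp₂) (hinter c₀ hc₀ ▸ hc)⟩⟩

end Near

/-- the intersection of two cosets near `α` is a nonempty coset near `α`. -/
theorem stmt1 {n : ℕ} (G : Set (Mat n ℝ)) (hG : IsRealUnipotentGroup n G)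
    (α : Mat n Hyperreal) (hα : α ∈ matSharp n G)
    (H₁ H₂ : Set (Mat n ℝ)) (hH₁ : IsRealAlgSubgroup n G H₁) (hH₂ : IsRealAlgSubgroup n G H₂)
    (g₁ g₂ : Mat n ℝ) (hg₁ : g₁ ∈ G) (hg₂ : g₂ ∈ G)
    (hnear₁ : NearCoset n G g₁ H₁ α) (hnear₂ : NearCoset n G g₂ H₂ α) :
    (({g₁} * H₁) ∩ ({g₂} * H₂)).Nonempty ∧
    ∀ c ∈ ({g₁} * H₁) ∩ ({g₂} * H₂),
      ({g₁} * H₁) ∩ ({g₂} * H₂) = {c} * (H₁ ∩ H₂) ∧ NearCoset n G c (H₁ ∩ H₂) α :=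
  stmt1_general hG.isMatrixGroup hH₁ hH₂ hg₁ hnear₁ hnear₂
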